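/- arXiv:1411.5262 — 2 statements merged into one kernel-verified Lean document; each statement's English description precedes it below -/
import Mathlib

section
/- For all real x with |x| < 1 and |4x/(1+x)^2| < 1, and parameters a, b such that 2b is not zero or a negative integer, the identity (1+x)^{-2a} · ₂F₁(a, b; 2b; 4x/(1+x)^2) = ₂F₁(a, a-b+1/2; b+1/2; x²) holds. -/
open scoped Nat

/-- Pochhammer symbol (rising factorial). -/
noncomputable def poch (a : ℝ) (n : ℕ) : ℝ := (ascPochhammer ℝ n).eval a

/-- Gauss hypergeometric series ₂F₁(a,b;c;z). -/
noncomputable def F (a b c z : ℝ) : ℝ :=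
  ∑' n : ℕ, poch a n * poch b n / (poch c n * (n ! : ℝ)) * z ^ n

open Filter Topology

/-- Convergence of the power series with coefficients `k` on the open unit disc. -/
def PC (k : ℕ → ℝ) : Prop := ∀ r : ℝ, |r| < 1 → Summable fun n => k n * r ^ n

/-- Coefficients of the derivative. -/
def dC (k : ℕ → ℝ) (n : ℕ) : ℝ := (n + 1) * k (n + 1)

/-- Sum of the power series. -/
noncomputable def SC (k : ℕ → ℝ) (z : ℝ) : ℝ := ∑' n, k n * z ^ n

lemma PC.dC {k : ℕ → ℝ} (h : PC k) : PC (dC k) := by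
  intro r hr
  obtain ⟨ρ, h1, h2⟩ := exists_between hr
  have hρ : 0 < ρ := lt_of_le_of_lt (abs_nonneg r) h1
  have hs := h ρ (by rwa [abs_of_pos hρ])
  obtain ⟨C, hC⟩ := hs.tendsto_atTop_zero.norm.bddAbove_range
  have hC' : ∀ n, |k n| * ρ ^ n ≤ C := by
    intro n
    have := hC ⟨n, rfl⟩
    simpa [abs_mul, abs_of_pos hρ] using this
  have hq : ‖|r| / ρ‖ < 1 := by
    rw [Real.norm_eq_abs, abs_of_nonneg (by positivity)]
    rwa [div_lt_one hρ]
  have s1 := summable_pow_mul_geometric_of_norm_lt_one 1 hq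
  have s0 := summable_pow_mul_geometric_of_norm_lt_one 0 hq
  have s := (s1.add s0).mul_left (C / ρ)
  refine Summable.of_norm_bounded s ?_
  intro n
  have e : ‖_root_.dC k n * r ^ n‖ = (n + 1) * (|k (n+1)| * |r| ^ n) := by
    unfold _root_.dC
    rw [Real.norm_eq_abs, abs_mul, abs_mul, abs_pow, abs_of_nonneg (by positivity : (0:ℝ) ≤ n + 1)]
    ring
  rw [e]
  have e2 : |k (n+1)| * |r| ^ n = (|k (n+1)| * ρ ^ (n+1)) * ((|r| / ρ) ^ n / ρ) := by
    rw [div_pow]; field_simp; ring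
  rw [e2]
  calc ((n:ℝ) + 1) * ((|k (n+1)| * ρ ^ (n+1)) * ((|r| / ρ) ^ n / ρ))
      ≤ ((n:ℝ) + 1) * (C * ((|r| / ρ) ^ n / ρ)) := by
        gcongr; exact hC' _
    _ = _ := by ring

lemma PC.abs {k : ℕ → ℝ} (h : PC k) {r : ℝ} (hr : |r| < 1) : Summable fun n => |k n| * |r| ^ n := by
  have := (h r hr).abs
  simpa [abs_mul] using this

lemma PC.hasDerivAt {k : ℕ → ℝ} (h : PC k) {z : ℝ} (hz : |z| < 1) :
    HasDerivAt (SC k) (SC (_root_.dC k) z) z := by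
  obtain ⟨ρ, h1, h2⟩ := exists_between hz
  have hρ : 0 < ρ := lt_of_le_of_lt (abs_nonneg z) h1
  have hu : Summable fun n : ℕ => |k n| * (n * ρ ^ (n - 1)) := by
    rw [← summable_nat_add_iff 1]
    have := h.dC.abs (r := ρ) (by rwa [abs_of_pos hρ])
    refine this.congr ?_
    intro n
    unfold _root_.dC
    rw [abs_mul, abs_of_nonneg (by positivity : (0:ℝ) ≤ n + 1), abs_of_pos hρ]
    simp; ring
  have key := hasDerivAt_tsum_of_isPreconnected (𝕜 := ℝ) (g := fun n y => k n * y ^ n)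
    (g' := fun n y => k n * (n * y ^ (n - 1))) (t := Metric.ball 0 ρ) (y₀ := 0) (y := z) hu
    Metric.isOpen_ball (convex_ball 0 ρ).isPreconnected
    (fun n y _ => (hasDerivAt_pow n y).const_mul _) ?_ (by simpa using hρ) (h 0 (by simp))
    (by simpa using h1)
  · have hs : Summable fun n : ℕ => k n * (n * z ^ (n - 1)) := by
      rw [← summable_nat_add_iff 1]
      refine (h.dC z hz).congr ?_
      intro n; unfold _root_.dC; simp; ring
    have hv : SC (_root_.dC k) z = ∑' n : ℕ, k n * (n * z ^ (n - 1)) := by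
      rw [hs.tsum_eq_zero_add]
      simp only [SC, _root_.dC]
      simp
      congr 1; ext n; ring
    rw [hv]
    exact key
  · intro n y hy
    have hy : |y| < ρ := by simpa using hy
    rw [Real.norm_eq_abs, abs_mul, abs_mul, abs_pow, Nat.abs_cast]
    gcongr

lemma PC.analyticAt {k : ℕ → ℝ} (h : PC k) {z : ℝ} (hz : |z| < 1) : AnalyticAt ℝ (SC k) z := by
  obtain ⟨ρ, h1, h2⟩ := exists_between hz
  have hρ : 0 < ρ := lt_of_le_of_lt (abs_nonneg z) h1
  lift ρ to NNReal using hρ.le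
  let p := FormalMultilinearSeries.ofScalars ℝ k
  have hr : (ρ : ENNReal) ≤ p.radius := by
    apply FormalMultilinearSeries.le_radius_of_summable
    have := h.abs (r := ρ) (by rwa [abs_of_pos hρ])
    refine this.congr ?_
    intro n
    simp [p]
  have hp : (0 : ENNReal) < ρ := by exact_mod_cast hρ
  have hb := p.hasFPowerSeriesOnBall (hp.trans_le hr)
  have hfun : p.sum = SC k := by
    ext x
    have := FormalMultilinearSeries.ofScalars_sum_eq (E := ℝ) k x
    simp only [smul_eq_mul] at this
    exact this
  rw [hfun] at hb
  refine hb.analyticAt_of_mem ?_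
  refine Metric.eball_subset_eball hr ?_
  rw [Metric.eball_coe]
  simpa using h1

/-- The hypergeometric coefficient. -/
noncomputable def kC (a b c : ℝ) (n : ℕ) : ℝ := poch a n * poch b n / (poch c n * (n.factorial : ℝ))

lemma poch_succ (a : ℝ) (n : ℕ) : poch a (n+1) = poch a n * (a + n) := by
  unfold poch; rw [ascPochhammer_succ_eval]

lemma poch_ne {c : ℝ} (hc : ∀ j : ℕ, c + j ≠ 0) (n : ℕ) : poch c n ≠ 0 := by
  induction n with
  | zero => simp [poch]
  | succ n ih => rw [poch_succ]; exact mul_ne_zero ih (hc n)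

lemma kC_succ {a b c : ℝ} (hc : ∀ j : ℕ, c + j ≠ 0) (n : ℕ) :
    kC a b c (n+1) = kC a b c n * ((a + n) * (b + n) / ((c + n) * (n + 1))) := by
  unfold kC
  rw [poch_succ, poch_succ, poch_succ, Nat.factorial_succ]
  have h1 := poch_ne hc n
  have h2 := hc n
  have h3 : (n.factorial : ℝ) ≠ 0 := by positivity
  push_cast
  field_simp

lemma kC_PC {a b c : ℝ} (hc : ∀ j : ℕ, c + j ≠ 0) : PC (kC a b c) := by
  intro r hr
  obtain ⟨ρ, h1, h2⟩ := exists_between hr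
  refine summable_of_ratio_norm_eventually_le h2 ?_
  have t1 := tendsto_add_mul_div_add_mul_atTop_nhds a c 1 (one_ne_zero (α := ℝ))
  have t2 := tendsto_add_mul_div_add_mul_atTop_nhds b 1 1 (one_ne_zero (α := ℝ))
  have t := ((t1.mul t2).mul_const r).norm
  have : ∀ᶠ n : ℕ in atTop, ‖(a + 1 * (n:ℝ)) / (c + 1 * n) * ((b + 1 * n) / (1 + 1 * n)) * r‖ < ρ := by
    apply t.eventually_lt_const
    simpa using h1
  filter_upwards [this] with n hn
  have e : kC a b c (n+1) * r ^ (n+1) =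
    ((a + 1 * (n:ℝ)) / (c + 1 * n) * ((b + 1 * n) / (1 + 1 * n)) * r) * (kC a b c n * r ^ n) := by
    rw [kC_succ hc, div_mul_div_comm]; simp only [one_mul]; rw [add_comm 1 (n:ℝ)]; ring
  rw [e, norm_mul]
  gcongr

lemma F_eq (a b c : ℝ) : F a b c = SC (kC a b c) := by
  ext z; rfl

lemma hasSum_SC {k : ℕ → ℝ} (h : PC k) {z : ℝ} (hz : |z| < 1) :
    HasSum (fun n => k n * z ^ n) (SC k z) := (h z hz).hasSum

lemma hyp_ode {a b c : ℝ} (hc : ∀ j : ℕ, c + j ≠ 0) {z : ℝ} (hz : |z| < 1) :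
    z * (1 - z) * SC (dC (dC (kC a b c))) z + (c - (a + b + 1) * z) * SC (dC (kC a b c)) z
      - a * b * SC (kC a b c) z = 0 := by
  have h := kC_PC (a := a) (b := b) hc
  have s0 := hasSum_SC h hz
  have s1 := hasSum_SC h.dC hz
  have s2 := hasSum_SC h.dC.dC hz
  have shift : ∀ {k : ℕ → ℝ}, PC k → HasSum (fun n : ℕ => n * k n * z ^ n) (z * SC (dC k) z) := by
    intro k hk
    rw [← hasSum_nat_add_iff' 1]
    simp only [Finset.sum_range_one, Nat.cast_zero, zero_mul, sub_zero]
    refine ((hasSum_SC hk.dC hz).mul_left z).congr_fun ?_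
    intro n; unfold dC; push_cast; ring
  have zs1 := shift h
  have zs2 := shift h.dC
  have zzs2 : HasSum (fun n : ℕ => n * (n - 1) * kC a b c n * z ^ n)
      (z * z * SC (dC (dC (kC a b c))) z) := by
    rw [← hasSum_nat_add_iff' 1]
    simp only [Finset.sum_range_one, Nat.cast_zero, zero_mul, sub_zero]
    rw [mul_assoc]
    refine (zs2.mul_left z).congr_fun ?_
    intro n; unfold dC; push_cast; ring
  have tot := (((zs2.sub zzs2).add (s1.mul_left c)).sub (zs1.mul_left (a+b+1))).sub
    (s0.mul_left (a*b))
  have z0 : HasSum (fun _ : ℕ => (0:ℝ)) 0 := hasSum_zero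
  have := tot.unique (z0.congr_fun ?_)
  · linear_combination this
  · intro n
    have := kC_succ (a := a) (b := b) hc n
    have h2 := hc n
    have h3 : (n:ℝ) + 1 ≠ 0 := by positivity
    unfold dC
    rw [this]
    field_simp
    ring

/-- Uniqueness of analytic solutions at the regular singular point. -/
lemma uniq {b A B : ℝ} (hb : ∀ k : ℕ, 2 * b + (k : ℝ) ≠ 0) {D D1 D2 : ℝ → ℝ}
    (hD : AnalyticAt ℝ D 0) (h0 : D 0 = 0)
    (h1 : ∀ᶠ x in 𝓝 (0:ℝ), HasDerivAt D (D1 x) x)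
    (h2 : ∀ᶠ x in 𝓝 (0:ℝ), HasDerivAt D1 (D2 x) x)
    (ode : ∀ᶠ x in 𝓝 (0:ℝ), x * (1 - x^2) * D2 x + (2 * b - A * x^2) * D1 x - B * x * D x = 0) :
    ∀ᶠ x in 𝓝 (0:ℝ), D x = 0 := by
  by_contra hne
  obtain ⟨n, g, hg, hg0, hev⟩ := hD.exists_eventuallyEq_pow_smul_nonzero_iff.2 hne
  simp only [sub_zero, smul_eq_mul] at hev
  have hn : n ≠ 0 := by
    rintro rfl
    have := hev.self_of_nhds
    simp [h0] at this
    exact hg0 this.symm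
  obtain ⟨m, rfl⟩ := Nat.exists_eq_succ_of_ne_zero hn
  have hga := hg.eventually_analyticAt
  have hg'a := hg.deriv.eventually_analyticAt
  -- first derivative
  have e1 : ∀ᶠ x in 𝓝 (0:ℝ), D1 x = (m+1) * x^m * g x + x^(m+1) * deriv g x := by
    filter_upwards [h1, hev.eventually_nhds, hga] with x hx hxe hxg
    have hd := (hasDerivAt_pow (m+1) x).mul hxg.differentiableAt.hasDerivAt
    have := hx.unique (hd.congr_of_eventuallyEq hxe)
    simpa using this
  have e2 : ∀ᶠ x in 𝓝 (0:ℝ), x * D2 x = (m+1) * m * x^m * g x + 2 * (m+1) * x^(m+1) * deriv g x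
      + x^(m+2) * deriv (deriv g) x := by
    filter_upwards [h2, e1.eventually_nhds, hga, hg'a] with x hx hxe hxg hxg'
    have hd := ((((hasDerivAt_pow m x).const_mul ((m:ℝ)+1))).mul
      hxg.differentiableAt.hasDerivAt).add
      ((hasDerivAt_pow (m+1) x).mul hxg'.differentiableAt.hasDerivAt)
    have := hx.unique (hd.congr_of_eventuallyEq hxe)
    rw [this]
    rcases m with _ | m
    · simp; ring
    · push_cast; ring
  let Q : ℝ → ℝ := fun x => (1 - x^2) * ((m+1) * m * g x + 2 * (m+1) * x * deriv g x
      + x^2 * deriv (deriv g) x) + (2 * b - A * x^2) * ((m+1) * g x + x * deriv g x)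
      - B * x^2 * g x
  have hQ : ∀ᶠ x in 𝓝[≠] (0:ℝ), Q x = 0 := by
    filter_upwards [hev.filter_mono nhdsWithin_le_nhds, e1.filter_mono nhdsWithin_le_nhds,
      e2.filter_mono nhdsWithin_le_nhds, ode.filter_mono nhdsWithin_le_nhds,
      self_mem_nhdsWithin] with x a1 a2 a3 a4 a5
    have hx : x ^ m ≠ 0 := pow_ne_zero _ a5
    apply mul_left_cancel₀ hx
    rw [mul_zero, ← a4, a2, a1, mul_comm x (1 - x^2), mul_assoc, a3]
    simp only [Q, Nat.succ_eq_add_one]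
    ring
  have hQc : ContinuousAt Q 0 := by
    have c0 := hg.continuousAt
    have c1 := hg.deriv.continuousAt
    have c2 := hg.deriv.deriv.continuousAt
    simp only [Q]
    fun_prop
  have l1 : Tendsto Q (𝓝[≠] 0) (𝓝 (Q 0)) := hQc.tendsto.mono_left nhdsWithin_le_nhds
  have l2 : Tendsto Q (𝓝[≠] 0) (𝓝 0) := by
    refine tendsto_const_nhds.congr' ?_
    filter_upwards [hQ] with x hx using hx.symm
  have q0 := tendsto_nhds_unique l1 l2
  have : ((m:ℝ)+1) * (2 * b + m) * g 0 = 0 := by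
    simp only [Q] at q0; linear_combination q0
  have hm : (m:ℝ) + 1 ≠ 0 := by positivity
  exact mul_ne_zero (mul_ne_zero hm (hb m)) hg0 this

lemma rpow_analytic (p : ℝ) {x : ℝ} (hx : 0 < 1 + x) :
    AnalyticAt ℝ (fun x : ℝ => (1 + x) ^ p) x := by
  have h : AnalyticAt ℝ (fun x : ℝ => Real.exp (Real.log (1 + x) * p)) x := by
    apply AnalyticAt.rexp
    apply AnalyticAt.mul _ analyticAt_const
    exact (analyticAt_const.add analyticAt_id).log hx
  refine h.congr ?_
  have : ∀ᶠ y in 𝓝 x, 0 < 1 + y :=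
    (continuousAt_const.add continuousAt_id).eventually_const_lt hx
  filter_upwards [this] with y hy
  rw [Real.rpow_def_of_pos hy]

lemma mem_iff {x : ℝ} (hx : |x| < 1) :
    |4 * x / (1 + x) ^ 2| < 1 ↔ 0 < x^2 + 6 * x + 1 := by
  obtain ⟨h1, h2⟩ := abs_lt.1 hx
  have : 0 < (1 + x)^2 := by have : 0 < 1 + x := by linarith
                             positivity
  rw [abs_lt, lt_div_iff₀ this, div_lt_iff₀ this]
  constructor
  · rintro ⟨h, -⟩; nlinarith
  · intro h; exact ⟨by nlinarith, by nlinarith [mul_pos (sub_pos.2 h2) (sub_pos.2 h2)]⟩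

theorem gauss_quadratic (a b : ℝ) (hb : ∀ k : ℕ, 2 * b + (k : ℝ) ≠ 0)
    (x : ℝ) (hx : |x| < 1) (hx2 : |4 * x / (1 + x) ^ 2| < 1) :
    (1 + x) ^ (-(2 * a)) * F a b (2 * b) (4 * x / (1 + x) ^ 2) =
      F a (a - b + 1/2) (b + 1/2) (x ^ 2) := by
  have hc : ∀ j : ℕ, (b + 1/2) + (j:ℝ) ≠ 0 := by
    intro j h
    apply hb (2 * j + 1)
    push_cast
    linarith
  rw [F_eq, F_eq]
  have hk := kC_PC (a := a) (b := b) hb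
  have hl := kC_PC (a := a) (b := a - b + 1/2) hc
  have odek := fun {z : ℝ} (hz : |z| < 1) => hyp_ode (a := a) (b := b) hb hz
  have odel := fun {z : ℝ} (hz : |z| < 1) => hyp_ode (a := a) (b := a - b + 1/2) hc hz
  have k00 : SC (kC a b (2*b)) 0 = 1 := by
    unfold SC
    rw [tsum_eq_single 0 (by intro n hn; simp [hn])]
    simp [kC, poch]
  have l00 : SC (kC a (a - b + 1/2) (b + 1/2)) 0 = 1 := by
    unfold SC
    rw [tsum_eq_single 0 (by intro n hn; simp [hn])]
    simp [kC, poch]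
  generalize kC a b (2*b) = k at *
  generalize kC a (a - b + 1/2) (b + 1/2) = l at *
  let U : Set ℝ := {x | |x| < 1 ∧ |4 * x / (1 + x) ^ 2| < 1}
  have hU : IsPreconnected U := by
    apply Set.OrdConnected.isPreconnected
    constructor
    rintro u ⟨hu, hu'⟩ v ⟨hv, hv'⟩ w ⟨h1, h2⟩
    have hw : |w| < 1 := abs_lt.2 ⟨(abs_lt.1 hu).1.trans_le h1, h2.trans_lt (abs_lt.1 hv).2⟩
    refine ⟨hw, ?_⟩
    rw [mem_iff hw]
    rw [mem_iff hu] at hu'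
    have := (abs_lt.1 hu).1
    nlinarith [mul_nonneg (sub_nonneg.2 h1) (by linarith : 0 ≤ u + w + 6)]
  let D : ℝ → ℝ := fun x => (1 + x) ^ (-(2 * a)) * SC k (4 * x / (1 + x) ^ 2) - SC l (x ^ 2)
  have hpos : ∀ {y : ℝ}, |y| < 1 → 0 < 1 + y := fun h => by linarith [(abs_lt.1 h).1]
  have hsq : ∀ {y : ℝ}, |y| < 1 → |y ^ 2| < 1 := fun {y} h => by
    rw [abs_pow]; exact pow_lt_one₀ (abs_nonneg _) h two_ne_zero
  have hDa : AnalyticOnNhd ℝ D U := by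
    rintro y ⟨h1, h2⟩
    have hy := hpos h1
    apply AnalyticAt.sub
    · apply (rpow_analytic _ hy).mul
      refine AnalyticAt.fun_comp (hk.analyticAt h2) ?_
      refine AnalyticAt.div (by fun_prop) (by fun_prop) (by positivity)
    · exact AnalyticAt.fun_comp (hl.analyticAt (hsq h1)) (by fun_prop)
  have h0U : (0:ℝ) ∈ U := by simp [U]
  have hUn : U ∈ 𝓝 (0:ℝ) := by
    have c1 : ContinuousAt (fun x : ℝ => |x|) 0 := by fun_prop
    have c2 : ContinuousAt (fun x : ℝ => |4 * x / (1 + x) ^ 2|) 0 := by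
      apply ContinuousAt.abs
      apply ContinuousAt.div <;> first | fun_prop | simp
    exact (c1.eventually_lt_const (by simp)).and (c2.eventually_lt_const (by simp))
  let G1 : ℝ → ℝ := fun x => (1 + x) ^ (-(2 * a)) * (-(2 * a) / (1 + x) * SC k (4 * x / (1 + x) ^ 2)
    + 4 * (1 - x) / (1 + x) ^ 3 * SC (dC k) (4 * x / (1 + x) ^ 2))
  let G2 : ℝ → ℝ := fun x => (1 + x) ^ (-(2 * a)) *
    (2 * a * (2 * a + 1) / (1 + x)^2 * SC k (4 * x / (1 + x) ^ 2)
    + (-(4 * a) / (1 + x) * (4 * (1 - x) / (1 + x) ^ 3) + (8 * x - 16) / (1 + x)^4)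
      * SC (dC k) (4 * x / (1 + x) ^ 2)
    + (4 * (1 - x) / (1 + x) ^ 3) ^ 2 * SC (dC (dC k)) (4 * x / (1 + x) ^ 2))
  let H1 : ℝ → ℝ := fun x => 2 * x * SC (dC l) (x^2)
  let H2 : ℝ → ℝ := fun x => 2 * SC (dC l) (x^2) + 4 * x^2 * SC (dC (dC l)) (x^2)
  have dp : ∀ y ∈ U, HasDerivAt (fun x : ℝ => (1 + x) ^ (-(2 * a)))
      ((1 + y) ^ (-(2 * a)) * (-(2 * a) / (1 + y))) y := by
    rintro y ⟨h1, h2⟩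
    have hy := hpos h1
    have := ((hasDerivAt_id' y).const_add 1).rpow_const (p := -(2*a)) (Or.inl hy.ne')
    refine HasDerivAt.congr_deriv this ?_
    rw [Real.rpow_sub_one hy.ne']
    ring
  have d1 : ∀ y ∈ U, HasDerivAt (fun x : ℝ => 1 + x) 1 y := fun y _ => (hasDerivAt_id' y).const_add 1
  have dz : ∀ y ∈ U, HasDerivAt (fun x : ℝ => 4 * x / (1 + x)^2) (4 * (1 - y) / (1 + y)^3) y := by
    rintro y hyU
    have hy := hpos hyU.1
    have := ((hasDerivAt_id' y).const_mul 4).div ((d1 y hyU).fun_pow 2) (pow_ne_zero _ hy.ne')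
    refine HasDerivAt.congr_deriv this ?_
    field_simp
    push_cast
    ring
  have dz' : ∀ y ∈ U, HasDerivAt (fun x : ℝ => 4 * (1 - x) / (1 + x)^3) ((8 * y - 16) / (1 + y)^4) y := by
    rintro y hyU
    have hy := hpos hyU.1
    have := (((hasDerivAt_id' y).const_sub 1).const_mul 4).div ((d1 y hyU).fun_pow 3) (pow_ne_zero _ hy.ne')
    refine HasDerivAt.congr_deriv this ?_
    field_simp
    push_cast
    ring
  have di : ∀ y ∈ U, HasDerivAt (fun x : ℝ => -(2 * a) / (1 + x)) (2 * a / (1 + y)^2) y := by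
    rintro y hyU
    have hy := hpos hyU.1
    have := (hasDerivAt_const y (-(2*a))).div (d1 y hyU) hy.ne'
    refine HasDerivAt.congr_deriv this ?_
    ring
  have dk : ∀ {k : ℕ → ℝ}, PC k → ∀ y ∈ U, HasDerivAt (fun x : ℝ => SC k (4 * x / (1 + x)^2))
      (SC (dC k) (4 * y / (1 + y)^2) * (4 * (1 - y) / (1 + y)^3)) y := by
    intro k hk y hy
    exact (hk.hasDerivAt hy.2).comp y (dz y hy)
  have dl : ∀ {k : ℕ → ℝ}, PC k → ∀ y ∈ U, HasDerivAt (fun x : ℝ => SC k (x^2))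
      (SC (dC k) (y^2) * (2 * y)) y := by
    intro k hk y hy
    have := HasDerivAt.comp (h₂ := SC k) (h := fun x : ℝ => x ^ 2) y
      (hk.hasDerivAt (hsq hy.1)) (hasDerivAt_pow 2 y)
    exact this.congr_deriv (by simp)
  have hD1 : ∀ y ∈ U, HasDerivAt D (G1 y - H1 y) y := by
    intro y hy
    have := ((dp y hy).mul (dk hk y hy)).sub (dl hl y hy)
    refine HasDerivAt.congr_deriv this ?_
    simp only [G1, H1]
    ring
  have hD2 : ∀ y ∈ U, HasDerivAt (fun y => G1 y - H1 y) (G2 y - H2 y) y := by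
    intro y hy
    have := ((dp y hy).mul (((di y hy).mul (dk hk y hy)).add ((dz' y hy).mul (dk hk.dC y hy)))).sub
      (((hasDerivAt_id' y).const_mul 2).mul (dl hl.dC y hy))
    refine HasDerivAt.congr_deriv this ?_
    simp only [G2, H2, Pi.mul_apply, Pi.add_apply]
    generalize SC k (4 * y / (1 + y)^2) = A0
    generalize SC (dC k) (4 * y / (1 + y)^2) = A1
    generalize SC (dC (dC k)) (4 * y / (1 + y)^2) = A2
    have hy1 := hpos hy.1
    generalize (1 + y) ^ (-(2 * a)) = p
    field_simp
    ring
  have hev : ∀ᶠ x in 𝓝 (0:ℝ), D x = 0 := by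
    refine uniq (A := 4 * a - 2 * b + 2) (B := 2 * a * (2 * a - 2 * b + 1)) hb (hDa 0 h0U) ?_
      (D1 := fun y => G1 y - H1 y) (D2 := fun y => G2 y - H2 y) ?_ ?_ ?_
    · simp [D, k00, l00]
    · filter_upwards [hUn] with y hy using hD1 y hy
    · filter_upwards [hUn] with y hy using hD2 y hy
    · filter_upwards [hUn] with y hy
      have o1 := odek hy.2
      have o2 := odel (hsq hy.1)
      have hy1 := hpos hy.1
      simp only [D, G1, G2, H1, H2]
      generalize (1 + y) ^ (-(2 * a)) = p
      generalize SC k (4 * y / (1 + y)^2) = A0 at *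
      generalize SC (dC k) (4 * y / (1 + y)^2) = A1 at *
      generalize SC (dC (dC k)) (4 * y / (1 + y)^2) = A2 at *
      generalize SC l (y^2) = B0 at *
      generalize SC (dC l) (y^2) = B1 at *
      generalize SC (dC (dC l)) (y^2) = B2 at *
      have e1 : y * (1 - y^2) * (p *
        (2 * a * (2 * a + 1) / (1 + y)^2 * A0
        + (-(4 * a) / (1 + y) * (4 * (1 - y) / (1 + y) ^ 3) + (8 * y - 16) / (1 + y)^4)
          * A1 + (4 * (1 - y) / (1 + y) ^ 3) ^ 2 * A2)) +
        (2 * b - (4 * a - 2 * b + 2) * y^2) * (p * (-(2 * a) / (1 + y) * A0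
          + 4 * (1 - y) / (1 + y) ^ 3 * A1))
        - 2 * a * (2 * a - 2 * b + 1) * y * (p * A0)
        = 4 * (1 - y) / (1 + y) * p * (4 * y / (1 + y)^2 * (1 - 4 * y / (1 + y)^2) * A2 +
          (2 * b - (a + b + 1) * (4 * y / (1 + y)^2)) * A1 - a * b * A0) := by
        field_simp
        ring
      rw [o1] at e1
      linear_combination e1 - 4 * y * o2
  have := hDa.eqOn_zero_of_preconnected_of_eventuallyEq_zero hU h0U hev ⟨hx, hx2⟩
  simpa [D, sub_eq_zero] using this
end

section
/- For |x| < 1 and parameters a, b with 2b+1 not zero or a negative integer, the function y₁(x) = ₂F₁(a, a−b+1/2; b+1/2; x²) − (2ax/(2b+1)) ₂F₁(a+1, a−b+1/2; b+3/2; x²) satisfies the differential equation x(1−x²)y'' + (2b+1 + 2x − (4a−2b+1)x²)y' + 2a(1 + 2(b−a)x)y = 0. -/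
open scoped Nat

/-- The first Frobenius solution `y₁`. -/
noncomputable def y₁ (a b : ℝ) (t : ℝ) : ℝ :=
  F a (a - b + 1/2) (b + 1/2) (t ^ 2)
    - (2 * a * t / (2 * b + 1)) * F (a + 1) (a - b + 1/2) (b + 3/2) (t ^ 2)

/-- all the power series coefficients of y₁ -/
noncomputable def dco (a b : ℝ) : ℕ → ℝ
  | 0 => 1
  | (m+1) => - dco a b m * (if Even m then (2*a+m)/(2*b+1+m) else (2*a-2*b+m)/(m+1))

/-- absolutely convergent in the unit disc -/
def Good (d : ℕ → ℝ) : Prop := ∀ r : ℝ, 0 < r → r < 1 → Summable (fun n => |d n| * r ^ n)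

lemma ratio_tendsto (p q : ℝ) : Filter.Tendsto (fun n : ℕ => |(p + n) / (q + n)|) Filter.atTop (nhds 1) := by
  have h0 : Filter.Tendsto (fun n : ℕ => (q + (n:ℝ))) Filter.atTop Filter.atTop :=
    Filter.tendsto_atTop_add_const_left _ _ tendsto_natCast_atTop_atTop
  have h1 : Filter.Tendsto (fun n : ℕ => 1 + (p - q) * (q + (n:ℝ))⁻¹) Filter.atTop (nhds (1 + (p - q) * 0)) :=
    (h0.inv_tendsto_atTop.const_mul (p-q)).const_add 1
  have h2 : Filter.Tendsto (fun n : ℕ => (p + n) / (q + n)) Filter.atTop (nhds (1 + (p - q) * 0)) := by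
    refine h1.congr' ?_
    filter_upwards [h0.eventually_gt_atTop 0] with n hn
    field_simp
    ring
  simpa using h2.abs

lemma dco_good (a b : ℝ) : Good (dco a b) := by
  intro r hr hr1
  obtain ⟨s, hs, hs1⟩ := exists_between hr1
  have hlt : (1:ℝ) < s / r := by rw [lt_div_iff₀ hr]; linarith
  have e1 := (ratio_tendsto (2*a) (2*b+1)).eventually_lt_const hlt
  have e2 := (ratio_tendsto (2*a-2*b) 1).eventually_lt_const hlt
  refine summable_of_ratio_norm_eventually_le (r := s) hs1 ?_
  filter_upwards [e1, e2] with n h1 h2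
  have key : |(if Even n then (2*a+n)/(2*b+1+n) else (2*a-2*b+n)/((n:ℝ)+1))| ≤ s / r := by
    split_ifs
    · exact h1.le
    · rw [add_comm (n:ℝ) 1]; exact h2.le
  rw [le_div_iff₀ hr] at key
  simp only [dco, Real.norm_eq_abs, abs_mul, abs_neg, abs_abs, abs_pow, abs_of_pos hr, pow_succ]
  have := mul_le_mul_of_nonneg_right key (mul_nonneg (abs_nonneg (dco a b n)) (pow_nonneg hr.le n))
  linarith

lemma Good.summable {d : ℕ → ℝ} (h : Good d) {x : ℝ} (hx : |x| < 1) : Summable (fun n => d n * x ^ n) := by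
  obtain ⟨r, hr, hr1⟩ := exists_between hx
  have h0 : 0 < r := (abs_nonneg x).trans_lt hr
  refine Summable.of_norm_bounded (h r h0 hr1) fun n => ?_
  rw [Real.norm_eq_abs, abs_mul, abs_pow]
  gcongr

lemma Good.deriv {d : ℕ → ℝ} (h : Good d) : Good (fun n => (n + 1) * d (n + 1)) := by
  intro r h0 hr1
  obtain ⟨s, hs, hs1⟩ := exists_between hr1
  have hs0 : 0 < s := h0.trans hs
  have hq : ‖r / s‖ < 1 := by
    rw [Real.norm_eq_abs, abs_of_pos (by positivity), div_lt_one hs0]; exact hs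
  have hb := (summable_pow_mul_geometric_of_norm_lt_one 1 hq).tendsto_atTop_zero
  have hS := ((summable_nat_add_iff 1).2 (h s hs0 hs1)).mul_left (1 / r)
  refine Summable.of_norm_bounded_eventually_nat hS ?_
  have hb' := (Filter.tendsto_add_atTop_iff_nat 1).2 hb
  filter_upwards [hb'.eventually_lt_const (show (0:ℝ) < 1 by norm_num)] with n hn
  have e : ((n:ℝ) + 1) * r ^ (n+1) ≤ s ^ (n+1) := by
    rw [pow_one, div_pow, mul_div_assoc', div_lt_one (by positivity)] at hn
    push_cast at hn; exact hn.le
  have : |(n + 1) * d (n + 1)| * r ^ n = 1 / r * (|d (n+1)| * (((n:ℝ) + 1) * r ^ (n+1))) := by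
    rw [abs_mul, abs_of_pos (by positivity : (0:ℝ) < n + 1)]
    field_simp
    ring
  rw [Real.norm_eq_abs, abs_of_nonneg (by positivity), this]
  gcongr

lemma Good.hasDerivAt {d : ℕ → ℝ} (h : Good d) {x : ℝ} (hx : |x| < 1) :
    HasDerivAt (fun t => ∑' n, d n * t ^ n) (∑' n : ℕ, ((n + 1) * d (n + 1)) * x ^ n) x := by
  obtain ⟨r, hr, hr1⟩ := exists_between hx
  have h0 : 0 < r := (abs_nonneg x).trans_lt hr
  have hs : Summable (fun n : ℕ => n * |d n| * r ^ (n - 1)) := by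
    rw [← summable_nat_add_iff 1]
    refine (h.deriv r h0 hr1).congr fun n => ?_
    rw [abs_mul, abs_of_pos (by positivity : (0:ℝ) < n + 1)]
    simp
  have H := hasDerivAt_tsum_of_isPreconnected (g := fun n t => d n * t ^ n)
    (g' := fun n t => d n * (n * t ^ (n-1))) (t := Metric.ball (0:ℝ) r) (y₀ := 0) (y := x) hs Metric.isOpen_ball
    (convex_ball _ _).isPreconnected
    (fun n y _ => (hasDerivAt_pow n y).const_mul (d n))
    (fun n y hy => by
      rw [mem_ball_zero_iff, Real.norm_eq_abs] at hy
      rw [Real.norm_eq_abs, abs_mul, abs_mul, abs_pow, Nat.abs_cast, mul_left_comm, mul_assoc]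
      gcongr)
    (by simpa using h0) (h.summable (by simp)) (by simpa using hr)
  have hs2 : Summable (fun n : ℕ => d n * (n * x ^ (n-1))) := by
    rw [← summable_nat_add_iff 1]
    refine (h.deriv.summable hx).congr fun n => ?_
    simp; ring
  have E : (∑' n : ℕ, d n * (n * x ^ (n-1))) = ∑' n : ℕ, ((n + 1) * d (n + 1)) * x ^ n := by
    rw [hs2.tsum_eq_zero_add]
    simp only [Nat.cast_zero, zero_mul, mul_zero, zero_add]
    refine tsum_congr fun n => ?_
    simp only [Nat.add_sub_cancel]
    push_cast
    ring
  rw [← E]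
  exact H

/-- multiplication by x -/
def shift (u : ℕ → ℝ) : ℕ → ℝ
  | 0 => 0
  | (n+1) => u n

lemma shift_hasSum {u : ℕ → ℝ} {x s : ℝ} (h : HasSum (fun n => u n * x ^ n) s) :
    HasSum (fun n => shift u n * x ^ n) (x * s) := by
  rw [← hasSum_nat_add_iff' 1]
  simp only [shift, Finset.range_one, Finset.sum_singleton, zero_mul, sub_zero]
  refine (h.mul_left x).congr_fun fun n => ?_
  ring

lemma dco_even_odd (a b : ℝ) (hb : ∀ k : ℕ, 2 * b + 1 + (k : ℝ) ≠ 0) (n : ℕ) :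
    poch a n * poch (a - b + 1/2) n / (poch (b + 1/2) n * (n ! : ℝ)) = dco a b (2 * n) ∧
    -(2 * a / (2 * b + 1)) * (poch (a+1) n * poch (a - b + 1/2) n / (poch (b + 3/2) n * (n ! : ℝ)))
       = dco a b (2 * n + 1) := by
  have ne1 : ∀ k : ℕ, b + 1/2 + (k:ℝ) ≠ 0 := fun k hk => hb (2*k) (by push_cast; linarith)
  have ne2 : ∀ k : ℕ, b + 3/2 + (k:ℝ) ≠ 0 := fun k hk => hb (2*k+2) (by push_cast; linarith)
  have ps : ∀ (c : ℝ) (k : ℕ), poch c (k+1) = poch c k * (c + k) := fun c k => by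
    simp only [poch]; exact ascPochhammer_succ_eval k c
  have p0 : ∀ c : ℝ, poch c 0 = 1 := fun c => by simp [poch]
  have o : ∀ k : ℕ, ¬ Even (2 * k + 1) := fun k => by simp
  have e : ∀ k : ℕ, Even (2 * k) := fun k => by simp
  induction n with
  | zero => simp [p0, dco]
  | succ n ih =>
    have f : ∀ m : ℕ, ((m + 1)! : ℝ) = (m + 1) * (m ! : ℝ) := fun m => by
      rw [Nat.factorial_succ]; push_cast; ring
    have E1 : dco a b (2 * (n+1)) = dco a b (2*n) * ((a + n) / (b + 1/2 + n)) * ((a-b+1/2+n)/(n+1)) := by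
      rw [show 2 * (n+1) = 2*n+1+1 by ring, dco, dco, if_neg (o n), if_pos (e n)]
      have h1 : (2*a + ((2*n : ℕ):ℝ)) / (2*b+1+((2*n : ℕ):ℝ)) = (a+n)/(b+1/2+n) := by
        rw [← mul_div_mul_left (a+n) (b+1/2+n) (two_ne_zero (α := ℝ))]; push_cast; congr 1 <;> ring
      have h2 : (2*a-2*b + ((2*n+1 : ℕ):ℝ)) / (((2*n+1 : ℕ):ℝ)+1) = (a-b+1/2+n)/(n+1) := by
        rw [← mul_div_mul_left (a-b+1/2+n) ((n:ℝ)+1) (two_ne_zero (α := ℝ))]; push_cast; congr 1 <;> ring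
      rw [h1, h2]; ring
    have E2 : dco a b (2 * (n+1) + 1) = dco a b (2*n+1) * ((a-b+1/2+n)/(n+1)) * ((a + 1 + n) / (b + 3/2 + n)) := by
      rw [show 2 * (n+1) = 2*n+1+1 by ring, dco, dco, if_neg (o n), if_pos (by rw [show 2*n+1+1 = 2*(n+1) by ring]; exact e _)]
      have h1 : (2*a + ((2*n+1+1 : ℕ):ℝ)) / (2*b+1+((2*n+1+1 : ℕ):ℝ)) = (a+1+n)/(b+3/2+n) := by
        rw [← mul_div_mul_left (a+1+n) (b+3/2+n) (two_ne_zero (α := ℝ))]; push_cast; congr 1 <;> ring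
      have h2 : (2*a-2*b + ((2*n+1 : ℕ):ℝ)) / (((2*n+1 : ℕ):ℝ)+1) = (a-b+1/2+n)/(n+1) := by
        rw [← mul_div_mul_left (a-b+1/2+n) ((n:ℝ)+1) (two_ne_zero (α := ℝ))]; push_cast; congr 1 <;> ring
      rw [h1, h2]; ring
    rw [E1, E2, ← ih.1, ← ih.2]
    simp only [ps, f, div_eq_mul_inv, mul_inv]
    constructor <;> ring

lemma dco_rec (a b : ℝ) (hb : ∀ k : ℕ, 2 * b + 1 + (k : ℝ) ≠ 0) (k : ℕ) :
    (k+2) * (k+2*b+2) * dco a b (k+2) + 2*(k+1+a) * dco a b (k+1)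
      - (k+2*a)*(k+2*a-2*b) * dco a b k = 0 := by
  have h1 := hb k
  have h2 := hb (k+1)
  have h3 : (k:ℝ) + 1 ≠ 0 := by positivity
  have h4 : (k:ℝ) + 1 + 1 ≠ 0 := by positivity
  push_cast at h2
  rw [dco, dco]
  rcases Nat.even_or_odd k with hk | hk
  · rw [if_pos hk, if_neg (by simpa [Nat.even_add_one] using hk)]
    push_cast
    field_simp
    ring
  · have hk' := Nat.not_even_iff_odd.2 hk
    rw [if_neg hk', if_pos (by simpa [Nat.even_add_one] using hk)]
    push_cast
    field_simp
    ring

lemma tsum_split {d : ℕ → ℝ} {x : ℝ} (hS : Summable (fun n => d n * x ^ n)) :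
    ∑' n, d (2*n) * x ^ (2*n) + ∑' n, d (2*n+1) * x ^ (2*n+1) = ∑' n, d n * x ^ n := by
  have he : Summable (fun n => d (2*n) * x ^ (2*n)) :=
    hS.comp_injective (i := fun n : ℕ => 2*n) (fun m n h => by dsimp only at h; omega)
  have ho : Summable (fun n => d (2*n+1) * x ^ (2*n+1)) :=
    hS.comp_injective (i := fun n : ℕ => 2*n+1) (fun m n h => by dsimp only at h; omega)
  exact tsum_even_add_odd (f := fun n => d n * x ^ n) he ho

lemma y1_series (a b : ℝ) (hb : ∀ k : ℕ, 2 * b + 1 + (k : ℝ) ≠ 0) {x : ℝ} (hx : |x| < 1) :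
    y₁ a b x = ∑' n, dco a b n * x ^ n := by
  have hS := (dco_good a b).summable hx
  have e1 : F a (a - b + 1/2) (b + 1/2) (x ^ 2) = ∑' n, dco a b (2*n) * x ^ (2*n) := by
    unfold F
    refine tsum_congr fun n => ?_
    rw [(dco_even_odd a b hb n).1, pow_mul]
  have e2 : -(2 * a * x / (2 * b + 1)) * F (a + 1) (a - b + 1/2) (b + 3/2) (x ^ 2)
      = ∑' n, dco a b (2*n+1) * x ^ (2*n+1) := by
    unfold F
    rw [← tsum_mul_left]
    refine tsum_congr fun n => ?_
    rw [← (dco_even_odd a b hb n).2, pow_succ x (2 * n), pow_mul]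
    ring
  have e3 := tsum_split hS
  rw [← e1, ← e2] at e3
  rw [← e3]
  unfold y₁
  ring

theorem y1_solves_ode (a b : ℝ) (hb : ∀ k : ℕ, 2 * b + 1 + (k : ℝ) ≠ 0) :
    ∀ x : ℝ, |x| < 1 →
      x * (1 - x ^ 2) * deriv (deriv (y₁ a b)) x
        + (2 * b + 1 + 2 * x - (4 * a - 2 * b + 1) * x ^ 2) * deriv (y₁ a b) x
        + 2 * a * (1 + 2 * (b - a) * x) * y₁ a b x = 0 := by
  intro x hx
  have g0 := dco_good a b
  have g1 := g0.deriv
  have g2 := g1.deriv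
  have nb : ∀ {z : ℝ}, |z| < 1 → ∀ᶠ t in nhds z, |t| < 1 := fun hz =>
    (continuous_abs.tendsto _).eventually_lt_const hz
  have D1 : ∀ {z : ℝ}, |z| < 1 → deriv (y₁ a b) z = ∑' n : ℕ, ((n + 1) * dco a b (n + 1)) * z ^ n := by
    intro z hz
    refine HasDerivAt.deriv ((g0.hasDerivAt hz).congr_of_eventuallyEq ?_)
    filter_upwards [nb hz] with t ht using y1_series a b hb ht
  have D2 := HasDerivAt.deriv ((g1.hasDerivAt hx).congr_of_eventuallyEq
    (f₁ := deriv (y₁ a b)) (by filter_upwards [nb hx] with t ht using D1 ht))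
  have s0 := (g0.summable hx).hasSum
  have s1 := (g1.summable hx).hasSum
  have s2 := (g2.summable hx).hasSum
  rw [← y1_series a b hb hx] at s0
  rw [← D1 hx] at s1
  rw [← D2] at s2
  have t2 := shift_hasSum s2
  have t2' := shift_hasSum (shift_hasSum t2)
  have t1 := shift_hasSum s1
  have t1' := shift_hasSum t1
  have t0 := shift_hasSum s0
  have T := ((((((t2.sub t2').add (s1.mul_left (2*b+1))).add (t1.mul_left 2)).sub
    (t1'.mul_left (4*a-2*b+1))).add (s0.mul_left (2*a))).add (t0.mul_left (4*a*(b-a))))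
  have Z : HasSum (fun _ : ℕ => (0:ℝ)) 0 := hasSum_zero
  have C := Z.congr_fun (g := _) (fun n => ?_) |>.unique T
  · linear_combination -C
  · rcases n with _ | _ | k
    · simp [shift, dco]
      have h1 := hb 0
      simp at h1
      field_simp
      ring
    · have h := dco_rec a b hb 0
      simp only [shift]
      push_cast at h ⊢
      simp only [zero_add] at h ⊢
      linear_combination x * h
    · have h := dco_rec a b hb (k+1)
      rcases k with _ | k
      · simp only [shift]
        push_cast at h ⊢
        linear_combination x^2 * h
      · simp only [shift]
        push_cast at h ⊢
        linear_combination x^(k+3) * h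
end
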